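/- Let V be a real inner product space and let A, B, C ∈ V be three points that are not collinear. Denote by ∠BAC the unoriented angle at A between the vectors B − A and C − A, and by ∠ACB the unoriented angle at C between the vectors A − C and B − C (both angles lie in [0, π]). If ∠BAC + 2·∠ACB > π, then dist(A, C) < dist(A, B). (This is the perturbation-decrease criterion of Triangle Attack: with x = A the benign sample, x_t^adv = B the current adversarial example with perturbation δ_t = dist(A,B), angle β_t = ∠BAC at x, and angle α_t = ∠ACB at the new point x_{t+1}^adv = C, the condition β_t + 2α_t > π guarantees δ_{t+1} = dist(A,C) < δ_t.) -/

import Mathlib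

open Real EuclideanGeometry

/-- Triangle Attack perturbation-decrease criterion: if `∠BAC + 2·∠ACB > π` in a
nondegenerate triangle, then `dist A C < dist A B`. -/
theorem triangle_attack_decrease
    {V : Type*} [NormedAddCommGroup V] [InnerProductSpace ℝ V]
    (A B C : V) (h : ¬ Collinear ℝ ({A, B, C} : Set V))
    (hangle : EuclideanGeometry.angle B A C + 2 * EuclideanGeometry.angle A C B > π) :
    dist A C < dist A B := by
  have h' : ¬ Collinear ℝ ({A, C, B} : Set V) := by
    rwa [Set.pair_comm C B]
  have hne : A ≠ B := by
    rintro rfl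
    apply h
    simpa using collinear_pair ℝ A C
  have hsum := angle_add_angle_add_angle_eq_pi C hne
  rw [← EuclideanGeometry.angle_lt_iff_dist_lt h']
  have e1 := EuclideanGeometry.angle_comm C B A
  have e2 := EuclideanGeometry.angle_comm B C A
  linarith
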